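/- arXiv:1910.07101 — 3 statements merged into one kernel-verified Lean document; each statement's English description precedes it below -/
import Mathlib

section
/- Let w : [0,π] → ℝ be of class C¹. Then ∫_{𝕊^N} ( 4·|w'(q(z))|² + a_N·w(q(z))² ) dσ(z) = ∫₀^π ( |w'(t)|² + (a_N/4)·|w(t)|² ) h(t) dt. (The quantity 4|w'(q(z))|² is the squared norm of the tangential gradient of the O(m)×O(n)-invariant function w ∘ q on 𝕊^N at points off the two exceptional orbits q⁻¹(0) ∪ q⁻¹(π), which form a σ-null set.) -/
/-!
The statement is the coarea formula for the orbit map `q`: the pushforward of the surface measure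
on `𝕊^N` under `q` is `h(t) / 4 dt` on `(0, π)` (`lintegral_qsplit`). The factor `1 / 4` turns
`4 |w'|² + a_N w²` into `|w'|² + (a_N / 4) w²`.

To compute the pushforward, extend `f ∘ q` to a function on `ℝ^{N+1}` homogeneous of degree `0`,
multiply by a radial cutoff `k(|z|)` and integrate over `ℝ^{N+1}` in two ways. Spherical coordinates
(`lintegral_of_separated`) give `C ∫ f(q) dσ` with `C = ∫ r^N k(r) dr`. Splitting
`ℝ^{N+1} = ℝ^m × ℝ^n` (`exists_split`), spherical coordinates in both factors
(`lintegral_norm_prod`) and then plane polar coordinates `|z₁| = r cos θ`, `|z₂| = r sin θ`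
(`lintegral_quadrant`), where `q = 2θ`, give
`C |𝕊^{m-1}| |𝕊^{n-1}| ∫ f(2θ) cos^{m-1} θ sin^{n-1} θ dθ` over `0 < θ < π / 2`. Cancelling `C` and
substituting `t = 2θ` finishes the computation. Everything is done with lower integrals of
nonnegative functions, which avoids integrability conditions; this suffices because `a_N ≥ 0`.
-/

open MeasureTheory

/-- The total surface measure `|𝕊^{d−1}|` of the unit sphere in `ℝ^d`. -/
noncomputable def sphereVol (d : ℕ) : ℝ :=
  ((volume : Measure (EuclideanSpace ℝ (Fin d))).toSphere Set.univ).toReal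

/-- The weight `h(t) = 2|𝕊^{m−1}||𝕊^{n−1}| cos^{m−1}(t/2) sin^{n−1}(t/2)`. -/
noncomputable def hwt (m n : ℕ) (t : ℝ) : ℝ :=
  2 * sphereVol m * sphereVol n * Real.cos (t / 2) ^ (m - 1) * Real.sin (t / 2) ^ (n - 1)

/-- The orbit map `q(z₁,z₂) = arccos(|z₁|² − |z₂|²)` on `ℝ^{N+1} = ℝ^m × ℝ^n`,
where `z₁` collects the first `m` coordinates and `z₂` the remaining ones. -/
noncomputable def qsplit (N m : ℕ) (z : EuclideanSpace ℝ (Fin (N + 1))) : ℝ :=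
  Real.arccos ((∑ i : Fin (N + 1), if (i : ℕ) < m then z i ^ 2 else 0)
    - ∑ i : Fin (N + 1), if (i : ℕ) < m then 0 else z i ^ 2)

open Set Metric
open scoped ENNReal

/-- Spherical coordinates for a function that is a product of an angular factor `f` and a radial
factor `k`. The value at the origin is irrelevant. -/
lemma lintegral_of_separated {E : Type*} [NormedAddCommGroup E] [NormedSpace ℝ E]
    [Nontrivial E] [FiniteDimensional ℝ E] [MeasurableSpace E] [BorelSpace E]
    (μ : Measure E) [μ.IsAddHaarMeasure] {G : E → ℝ≥0∞} {f : sphere (0 : E) 1 → ℝ≥0∞}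
    {k : ℝ → ℝ≥0∞} (hf : Measurable f) (hk : Measurable k)
    (hG : ∀ (u : sphere (0 : E) 1) (r : ℝ), 0 < r → G (r • (u : E)) = f u * k r) :
    ∫⁻ x, G x ∂μ = (∫⁻ u, f u ∂μ.toSphere) *
      ∫⁻ r in Ioi (0 : ℝ), ENNReal.ofReal (r ^ (Module.finrank ℝ E - 1)) * k r := by
  have hk' : Measurable fun r : Ioi (0 : ℝ) => k r := hk.comp measurable_subtype_coe
  have hpow : Measurable fun r : Ioi (0 : ℝ) =>
      ENNReal.ofReal ((r : ℝ) ^ (Module.finrank ℝ E - 1)) := by fun_prop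
  calc
    ∫⁻ x, G x ∂μ = ∫⁻ x : ({(0)}ᶜ : Set E), G x ∂(μ.comap (↑)) := by
      rw [lintegral_subtype_comap (measurableSet_singleton _).compl, restrict_compl_singleton]
    _ = ∫⁻ p, f p.1 * k p.2
          ∂(μ.toSphere.prod (Measure.volumeIoiPow (Module.finrank ℝ E - 1))) := by
      rw [← μ.measurePreserving_homeomorphUnitSphereProd.lintegral_comp_emb
        (Homeomorph.measurableEmbedding _)]
      refine lintegral_congr fun x => ?_
      rw [← hG _ _ (homeomorphUnitSphereProd E x).2.2,
        ← homeomorphUnitSphereProd_symm_apply_coe, Homeomorph.symm_apply_apply]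
    _ = (∫⁻ u, f u ∂μ.toSphere) *
          ∫⁻ r : Ioi (0 : ℝ), k r ∂(Measure.volumeIoiPow (Module.finrank ℝ E - 1)) :=
      lintegral_prod_mul hf.aemeasurable hk'.aemeasurable
    _ = _ := by
      rw [Measure.volumeIoiPow, lintegral_withDensity_eq_lintegral_mul _ hpow hk',
        ← lintegral_subtype_comap measurableSet_Ioi
          fun r : ℝ => ENNReal.ofReal (r ^ (Module.finrank ℝ E - 1)) * k r]
      rfl

lemma lintegral_norm (d : ℕ) (hd : 0 < d) {k : ℝ → ℝ≥0∞} (hk : Measurable k) :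
    ∫⁻ x : EuclideanSpace ℝ (Fin d), k ‖x‖ = ENNReal.ofReal (sphereVol d) *
      ∫⁻ r in Ioi (0 : ℝ), ENNReal.ofReal (r ^ (d - 1)) * k r := by
  have : Nonempty (Fin d) := ⟨⟨0, hd⟩⟩
  have h := lintegral_of_separated (volume : Measure (EuclideanSpace ℝ (Fin d)))
    (G := fun x => k ‖x‖) (f := fun _ => 1) measurable_const hk
    (fun u r hr => by simp [norm_smul, abs_of_pos hr])
  rw [h, sphereVol, ENNReal.ofReal_toReal (measure_ne_top _ _), lintegral_one]
  simp only [finrank_euclideanSpace, Fintype.card_fin]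

lemma lintegral_norm_prod (m n : ℕ) (hm : 0 < m) (hn : 0 < n) {k : ℝ × ℝ → ℝ≥0∞}
    (hk : Measurable k) :
    ∫⁻ x : EuclideanSpace ℝ (Fin m) × EuclideanSpace ℝ (Fin n), k (‖x.1‖, ‖x.2‖) =
      ENNReal.ofReal (sphereVol m) * ENNReal.ofReal (sphereVol n) *
        ∫⁻ p in Ioi (0 : ℝ) ×ˢ Ioi (0 : ℝ),
          ENNReal.ofReal (p.1 ^ (m - 1)) * ENNReal.ofReal (p.2 ^ (n - 1)) * k p := by
  have h1 : ∀ x : EuclideanSpace ℝ (Fin m),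
      ∫⁻ y : EuclideanSpace ℝ (Fin n), k (‖x‖, ‖y‖) = ENNReal.ofReal (sphereVol n) *
        ∫⁻ b in Ioi (0 : ℝ), ENNReal.ofReal (b ^ (n - 1)) * k (‖x‖, b) := fun x =>
    lintegral_norm n hn (k := fun b => k (‖x‖, b)) (by fun_prop)
  have hmeas : Measurable fun a : ℝ =>
      ∫⁻ b in Ioi (0 : ℝ), ENNReal.ofReal (b ^ (n - 1)) * k (a, b) :=
    Measurable.lintegral_prod_right' (f := fun p : ℝ × ℝ =>
      ENNReal.ofReal (p.2 ^ (n - 1)) * k p) (by fun_prop)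
  rw [Measure.volume_eq_prod, lintegral_prod _ (by fun_prop)]
  simp_rw [h1]
  rw [lintegral_norm m hm (k := fun a => ENNReal.ofReal (sphereVol n) *
    ∫⁻ b in Ioi (0 : ℝ), ENNReal.ofReal (b ^ (n - 1)) * k (a, b)) (hmeas.const_mul _),
    Measure.volume_eq_prod, ← Measure.prod_restrict, lintegral_prod _ (by fun_prop), mul_assoc]
  congr 1
  rw [← lintegral_const_mul _ (by
    exact Measurable.lintegral_prod_right' (f := fun p : ℝ × ℝ =>
      ENNReal.ofReal (p.1 ^ (m - 1)) * ENNReal.ofReal (p.2 ^ (n - 1)) * k p) (by fun_prop))]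
  refine lintegral_congr fun a => ?_
  rw [mul_left_comm, ← lintegral_const_mul _ (by fun_prop)]
  simp_rw [mul_assoc]

/-- Plane polar coordinates restricted to the open first quadrant. -/
lemma lintegral_quadrant {g : ℝ × ℝ → ℝ≥0∞} (hg : Measurable g) :
    ∫⁻ p in Ioi (0 : ℝ) ×ˢ Ioi (0 : ℝ), g p =
      ∫⁻ r in Ioi (0 : ℝ), ∫⁻ θ in Ioo 0 (Real.pi / 2),
        ENNReal.ofReal r * g (r * Real.cos θ, r * Real.sin θ) := by
  have hQ : MeasurableSet (Ioi (0 : ℝ) ×ˢ Ioi (0 : ℝ)) := measurableSet_Ioi.prod measurableSet_Ioi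
  have hsub : Ioi (0 : ℝ) ×ˢ Ioo 0 (Real.pi / 2) ⊆ polarCoord.target := by
    rintro ⟨r, θ⟩ ⟨hr, h0, h1⟩
    exact ⟨hr, by linarith [Real.pi_pos], by linarith [Real.pi_pos]⟩
  rw [← lintegral_indicator hQ, ← lintegral_comp_polarCoord_symm]
  have hpt : ∀ p ∈ polarCoord.target,
      ENNReal.ofReal p.1 • (Ioi (0 : ℝ) ×ˢ Ioi (0 : ℝ)).indicator g (polarCoord.symm p) =
        (Ioi (0 : ℝ) ×ˢ Ioo 0 (Real.pi / 2)).indicator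
          (fun p => ENNReal.ofReal p.1 * g (p.1 * Real.cos p.2, p.1 * Real.sin p.2)) p := by
    rintro ⟨r, θ⟩ ⟨hr, h0, h1⟩
    simp only [mem_Ioi] at hr
    have hiff : polarCoord.symm (r, θ) ∈ Ioi (0 : ℝ) ×ˢ Ioi (0 : ℝ) ↔
        (r, θ) ∈ Ioi (0 : ℝ) ×ˢ Ioo 0 (Real.pi / 2) := by
      simp only [polarCoord_symm_apply, mem_prod, mem_Ioi, mem_Ioo, hr, true_and,
        mul_pos_iff_of_pos_left]
      constructor
      · rintro ⟨hc, hs⟩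
        constructor
        · by_contra! h
          exact absurd (Real.sin_nonpos_of_nonpos_of_neg_pi_le h h0.le) (by linarith)
        · by_contra! h
          exact absurd (Real.cos_nonpos_of_pi_div_two_le_of_le h (by simp at h1; linarith))
            (by linarith)
      · rintro ⟨ha, hb⟩
        exact ⟨Real.cos_pos_of_mem_Ioo ⟨by linarith, hb⟩,
          Real.sin_pos_of_pos_of_lt_pi ha (by linarith)⟩
    by_cases h : (r, θ) ∈ Ioi (0 : ℝ) ×ˢ Ioo 0 (Real.pi / 2)
    · rw [indicator_of_mem (hiff.2 h), indicator_of_mem h, polarCoord_symm_apply, smul_eq_mul]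
    · rw [indicator_of_notMem (mt hiff.1 h), indicator_of_notMem h, smul_zero]
  rw [setLIntegral_congr_fun polarCoord.open_target.measurableSet hpt,
    setLIntegral_indicator (measurableSet_Ioi.prod measurableSet_Ioo),
    inter_eq_left.2 hsub, Measure.volume_eq_prod, ← Measure.prod_restrict,
    lintegral_prod _ (by fun_prop)]

/-- The splitting `ℝ^d = ℝ^m × ℝ^n` into the first `m` and the last `n` coordinates preserves
volume, and the two partial sums of squares are the squared norms of the components. -/
lemma exists_split (d m n : ℕ) (hd : m + n = d) :
    ∃ e : EuclideanSpace ℝ (Fin d) → EuclideanSpace ℝ (Fin m) × EuclideanSpace ℝ (Fin n),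
      MeasurePreserving e ∧
      ∀ z, (∑ i : Fin d, if (i : ℕ) < m then z i ^ 2 else 0) = ‖(e z).1‖ ^ 2 ∧
        (∑ i : Fin d, if (i : ℕ) < m then 0 else z i ^ 2) = ‖(e z).2‖ ^ 2 := by
  subst hd
  refine ⟨fun z => (WithLp.toLp 2 fun i => z (Fin.castAdd n i),
    WithLp.toLp 2 fun i => z (Fin.natAdd m i)), ?_, fun z => ⟨?_, ?_⟩⟩
  · have h1 := PiLp.volume_preserving_ofLp (Fin (m + n))
    have h2 := (volume_measurePreserving_piCongrLeft (fun _ : Fin (m + n) => ℝ)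
      (finSumFinEquiv (m := m) (n := n))).symm
    have h3 := volume_measurePreserving_sumPiEquivProdPi (fun _ : Fin m ⊕ Fin n => ℝ)
    have h4 := (PiLp.volume_preserving_toLp (Fin m)).prod (PiLp.volume_preserving_toLp (Fin n))
    exact h4.comp (h3.comp (h2.comp h1))
  · simp [EuclideanSpace.norm_sq_eq, Fin.sum_univ_add]
  · simp [EuclideanSpace.norm_sq_eq, Fin.sum_univ_add]

lemma lintegral_Ioo_two_mul (g : ℝ → ℝ≥0∞) :
    ∫⁻ t in Ioo 0 Real.pi, g t = ∫⁻ θ in Ioo 0 (Real.pi / 2), 2 * g (2 * θ) := by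
  have himg : (fun θ : ℝ => 2 * θ) '' Ioo 0 (Real.pi / 2) = Ioo 0 Real.pi := by
    rw [image_mul_left_Ioo two_pos]
    congr 1 <;> ring
  rw [← himg, lintegral_image_eq_lintegral_abs_deriv_mul (f' := fun _ => 2) measurableSet_Ioo
    (fun x _ => by simpa using ((hasDerivAt_id x).const_mul 2).hasDerivWithinAt)
    ((mul_right_injective₀ two_ne_zero).injOn)]
  simp

/-- Some radial profile `k` has a radial integral in dimension `N + 1` that can be cancelled in
`ℝ≥0∞`. The indicator of `(-∞, 1)` serves as witness; the value of the integral plays no role. -/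
lemma exists_radial_cutoff (N : ℕ) : ∃ k : ℝ → ℝ≥0∞, Measurable k ∧
    ∫⁻ r in Ioi (0 : ℝ), ENNReal.ofReal (r ^ N) * k r ≠ 0 ∧
    ∫⁻ r in Ioi (0 : ℝ), ENNReal.ofReal (r ^ N) * k r ≠ ∞ := by
  have h : ∫⁻ r in Ioi (0 : ℝ), ENNReal.ofReal (r ^ N) * (Iio 1).indicator 1 r =
      ENNReal.ofReal (1 / (N + 1)) := by
    have h := Measure.volumeIoiPow_apply_Iio N ⟨1, mem_Ioi.2 one_pos⟩
    rw [one_pow] at h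
    rw [← h, Measure.volumeIoiPow, withDensity_apply _ measurableSet_Iio,
      setLIntegral_subtype measurableSet_Ioi _ fun a : ℝ ↦ .ofReal (a ^ N),
      image_subtype_val_Ioi_Iio]
    have hind : ∀ r : ℝ, ENNReal.ofReal (r ^ N) * (Iio 1).indicator 1 r =
        (Iio 1).indicator (fun r => ENNReal.ofReal (r ^ N)) r := fun r => by
      by_cases hr : r ∈ Iio (1 : ℝ) <;> simp [hr]
    simp_rw [hind]
    rw [setLIntegral_indicator measurableSet_Iio, inter_comm, Ioi_inter_Iio]
  refine ⟨(Iio 1).indicator 1, measurable_one.indicator measurableSet_Iio, ?_, ?_⟩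
  · rw [h]
    exact (ENNReal.ofReal_pos.2 (by positivity)).ne'
  · rw [h]
    exact ENNReal.ofReal_ne_top

lemma measurable_qsplit (N m : ℕ) : Measurable (qsplit N m) := by
  refine Real.continuous_arccos.measurable.comp ?_
  refine (Finset.measurable_sum _ fun i _ => ?_).sub (Finset.measurable_sum _ fun i _ => ?_) <;>
    split_ifs <;> fun_prop

/-- The pushforward of surface measure under `q` has density `h / 4` on `(0, π)`. -/
lemma lintegral_qsplit (N m n : ℕ) (hm : 2 ≤ m) (hn : 2 ≤ n) (hmn : m + n = N + 1)
    {f : ℝ → ℝ≥0∞} (hf : Measurable f) :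
    ∫⁻ z : sphere (0 : EuclideanSpace ℝ (Fin (N + 1))) 1, f (qsplit N m z)
        ∂((volume : Measure (EuclideanSpace ℝ (Fin (N + 1)))).toSphere)
      = ∫⁻ t in Ioo 0 Real.pi, f t * ENNReal.ofReal (hwt m n t / 4) := by
  obtain ⟨e, he, hnorm⟩ := exists_split (N + 1) m n hmn
  obtain ⟨k, hk, hC0, hCtop⟩ := exists_radial_cutoff N
  set C : ℝ≥0∞ := ∫⁻ r in Ioi (0 : ℝ), ENNReal.ofReal (r ^ N) * k r with hC_def
  -- The homogeneous extension of `f ∘ q`, cut off radially, as a function of `(|z₁|, |z₂|)`.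
  set Ψ : ℝ × ℝ → ℝ≥0∞ := fun p =>
    f (Real.arccos ((p.1 ^ 2 - p.2 ^ 2) / (p.1 ^ 2 + p.2 ^ 2))) * k √(p.1 ^ 2 + p.2 ^ 2) with hΨ_def
  have harccos : Measurable Real.arccos := Real.continuous_arccos.measurable
  have hΨ : Measurable Ψ :=
    (hf.comp (harccos.comp (by fun_prop))).mul (hk.comp (by fun_prop))
  have hq : Measurable fun z : sphere (0 : EuclideanSpace ℝ (Fin (N + 1))) 1 =>
      f (qsplit N m z) :=
    (hf.comp (measurable_qsplit N m)).comp measurable_subtype_coe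
  -- Spherical coordinates on the whole space.
  have h1 : ∫⁻ z, Ψ (‖(e z).1‖, ‖(e z).2‖) =
      (∫⁻ z : sphere (0 : EuclideanSpace ℝ (Fin (N + 1))) 1, f (qsplit N m z)
        ∂((volume : Measure (EuclideanSpace ℝ (Fin (N + 1)))).toSphere)) * C := by
    rw [lintegral_of_separated volume (G := fun z => Ψ (‖(e z).1‖, ‖(e z).2‖)) hq hk]
    · simp only [finrank_euclideanSpace, Fintype.card_fin, Nat.add_sub_cancel, hC_def]
    · intro u r hr
      have hu1 : ‖(e (r • (u : EuclideanSpace ℝ (Fin (N + 1))))).1‖ ^ 2 =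
          r ^ 2 * ‖(e u).1‖ ^ 2 := by
        rw [← (hnorm _).1, ← (hnorm _).1, Finset.mul_sum]
        simp [mul_pow]
      have hu2 : ‖(e (r • (u : EuclideanSpace ℝ (Fin (N + 1))))).2‖ ^ 2 =
          r ^ 2 * ‖(e u).2‖ ^ 2 := by
        rw [← (hnorm _).2, ← (hnorm _).2, Finset.mul_sum]
        simp [mul_pow]
      have hone : ‖(e u).1‖ ^ 2 + ‖(e u).2‖ ^ 2 = 1 := by
        have hu : ‖(u : EuclideanSpace ℝ (Fin (N + 1)))‖ ^ 2 = 1 := by simp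
        rw [← (hnorm _).1, ← (hnorm _).2, ← Finset.sum_add_distrib]
        refine Eq.trans ?_ hu
        rw [EuclideanSpace.norm_sq_eq]
        refine Finset.sum_congr rfl fun i _ => ?_
        split_ifs <;> simp
      simp only [hΨ_def]
      rw [hu1, hu2, ← mul_add, hone, ← mul_sub, mul_one, Real.sqrt_sq hr.le,
        mul_div_cancel_left₀ _ (by positivity), qsplit, (hnorm _).1, (hnorm _).2]
  -- Spherical coordinates on each of the two factors.
  have h2 : ∫⁻ z, Ψ (‖(e z).1‖, ‖(e z).2‖) =
      ENNReal.ofReal (sphereVol m) * ENNReal.ofReal (sphereVol n) *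
        ∫⁻ p in Ioi (0 : ℝ) ×ˢ Ioi (0 : ℝ),
          ENNReal.ofReal (p.1 ^ (m - 1)) * ENNReal.ofReal (p.2 ^ (n - 1)) * Ψ p := by
    rw [← lintegral_norm_prod m n (by lia) (by lia) hΨ,
      ← he.lintegral_comp (f := fun x => Ψ (‖x.1‖, ‖x.2‖)) (by fun_prop)]
  -- Plane polar coordinates `(|z₁|, |z₂|) = (r cos θ, r sin θ)`, for which `q = 2θ`.
  have h3 : ∫⁻ p in Ioi (0 : ℝ) ×ˢ Ioi (0 : ℝ),
        ENNReal.ofReal (p.1 ^ (m - 1)) * ENNReal.ofReal (p.2 ^ (n - 1)) * Ψ p =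
      C * ∫⁻ θ in Ioo 0 (Real.pi / 2), f (2 * θ) *
        ENNReal.ofReal (Real.cos θ ^ (m - 1) * Real.sin θ ^ (n - 1)) := by
    rw [lintegral_quadrant (by fun_prop), hC_def, ← lintegral_mul_const _ (by fun_prop)]
    refine setLIntegral_congr_fun measurableSet_Ioi fun r (hr : 0 < r) => ?_
    simp only
    rw [← lintegral_const_mul _ (by fun_prop)]
    refine setLIntegral_congr_fun measurableSet_Ioo fun θ hθ => ?_
    have hc : 0 < Real.cos θ := Real.cos_pos_of_mem_Ioo ⟨by linarith [hθ.1, Real.pi_pos], hθ.2⟩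
    have hs : 0 < Real.sin θ :=
      Real.sin_pos_of_pos_of_lt_pi hθ.1 (by linarith [hθ.2, Real.pi_pos])
    have hsum : (r * Real.cos θ) ^ 2 + (r * Real.sin θ) ^ 2 = r ^ 2 := by
      rw [mul_pow, mul_pow, ← mul_add, Real.cos_sq_add_sin_sq, mul_one]
    have hdiff : (r * Real.cos θ) ^ 2 - (r * Real.sin θ) ^ 2 = r ^ 2 * Real.cos (2 * θ) := by
      rw [Real.cos_two_mul']
      ring
    have hpow : r * ((r * Real.cos θ) ^ (m - 1) * (r * Real.sin θ) ^ (n - 1)) =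
        r ^ N * (Real.cos θ ^ (m - 1) * Real.sin θ ^ (n - 1)) := by
      rw [show N = 1 + (m - 1) + (n - 1) by lia, pow_add, pow_add, mul_pow, mul_pow]
      ring
    simp only [hΨ_def]
    rw [hsum, hdiff, Real.sqrt_sq hr.le, mul_div_cancel_left₀ _ (by positivity),
      Real.arccos_cos (by linarith [hθ.1]) (by linarith [hθ.2]), ← mul_assoc,
      ← ENNReal.ofReal_mul (by positivity), ← ENNReal.ofReal_mul hr.le, hpow,
      ENNReal.ofReal_mul (by positivity)]
    ring
  clear_value C
  have hVm : 0 ≤ sphereVol m := ENNReal.toReal_nonneg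
  have hVn : 0 ≤ sphereVol n := ENNReal.toReal_nonneg
  rw [← ENNReal.mul_left_inj hC0 hCtop, ← h1, h2, h3, lintegral_Ioo_two_mul,
    mul_left_comm, mul_comm C, ← lintegral_const_mul _ (by fun_prop)]
  congr 1
  refine lintegral_congr fun θ => ?_
  have hval : ENNReal.ofReal (sphereVol m) * ENNReal.ofReal (sphereVol n) *
      ENNReal.ofReal (Real.cos θ ^ (m - 1) * Real.sin θ ^ (n - 1)) =
        2 * ENNReal.ofReal (hwt m n (2 * θ) / 4) := by
    rw [← ENNReal.ofReal_mul hVm, ← ENNReal.ofReal_mul (by positivity),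
      ← ENNReal.ofReal_ofNat 2, ← ENNReal.ofReal_mul (by norm_num), hwt,
      mul_div_cancel_left₀ _ two_ne_zero]
    congr 1
    ring
  rw [mul_left_comm, hval]
  ring

/-- For `w : [0,π] → ℝ` of class `C¹`,
`∫_{𝕊^N} (4|w'(q(z))|² + a_N w(q(z))²) dσ = ∫₀^π (|w'(t)|² + (a_N/4)|w(t)|²) h(t) dt`. -/
theorem energy_invariant_eq_weighted_integral (N m n : ℕ) (hN : 3 ≤ N)
    (hm : 2 ≤ m) (hn : 2 ≤ n) (hmn : m + n = N + 1)
    (w : ℝ → ℝ) (hw : ContDiffOn ℝ 1 w (Set.Icc 0 Real.pi)) :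
    ∫ z : Metric.sphere (0 : EuclideanSpace ℝ (Fin (N + 1))) 1,
        (4 * derivWithin w (Set.Icc 0 Real.pi) (qsplit N m z) ^ 2
          + (N * (N - 2) / 4 : ℝ) * w (qsplit N m z) ^ 2)
        ∂((volume : Measure (EuclideanSpace ℝ (Fin (N + 1)))).toSphere)
      = ∫ t in (0 : ℝ)..Real.pi,
          (derivWithin w (Set.Icc 0 Real.pi) t ^ 2
            + (N * (N - 2) / 4 : ℝ) / 4 * w t ^ 2) * hwt m n t := by
  have hcw : ContinuousOn w (Icc 0 Real.pi) := hw.continuousOn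
  have hcd : ContinuousOn (derivWithin w (Icc 0 Real.pi)) (Icc 0 Real.pi) :=
    hw.continuousOn_derivWithin (uniqueDiffOn_Icc Real.pi_pos) le_rfl
  have ha : (0 : ℝ) ≤ N * (N - 2) / 4 := by
    have : (3 : ℝ) ≤ N := by exact_mod_cast hN
    have : (0 : ℝ) ≤ N - 2 := by linarith
    positivity
  set F : ℝ → ℝ := fun t =>
    4 * derivWithin w (Icc 0 Real.pi) t ^ 2 + (N * (N - 2) / 4 : ℝ) * w t ^ 2 with hF_def
  have hF0 : ∀ t, 0 ≤ F t := fun t => by positivity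
  have hFc : ContinuousOn F (Icc 0 Real.pi) :=
    ((hcd.pow 2).const_mul 4).add ((hcw.pow 2).const_mul _)
  -- Outside `[0, π]` the integrand need not be measurable, so it is cut off there.
  have hcut : Measurable ((Icc 0 Real.pi).indicator F) := by
    have := hFc.measurable_piecewise (g := 0) continuousOn_const measurableSet_Icc
    rwa [piecewise_eq_indicator] at this
  have hq_mem : ∀ z, qsplit N m z ∈ Icc 0 Real.pi := fun z =>
    ⟨Real.arccos_nonneg _, Real.arccos_le_pi _⟩
  have hFq : Measurable fun z : sphere (0 : EuclideanSpace ℝ (Fin (N + 1))) 1 =>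
      F (qsplit N m z) := by
    have := (hcut.comp (measurable_qsplit N m)).comp (measurable_subtype_coe
      (p := (· ∈ sphere (0 : EuclideanSpace ℝ (Fin (N + 1))) 1)))
    convert! this using 2 with z
    exact (indicator_of_mem (hq_mem _) F).symm
  have hV : ∀ d, 0 ≤ sphereVol d := fun d => ENNReal.toReal_nonneg
  have hh0 : ∀ t ∈ Ioo 0 Real.pi, 0 ≤ hwt m n t := fun t ht => by
    have hc : 0 ≤ Real.cos (t / 2) :=
      Real.cos_nonneg_of_mem_Icc ⟨by linarith [ht.1, ht.2], by linarith [ht.2]⟩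
    have hs : 0 ≤ Real.sin (t / 2) :=
      Real.sin_nonneg_of_nonneg_of_le_pi (by linarith [ht.1]) (by linarith [ht.1, ht.2])
    have := hV m
    have := hV n
    unfold hwt
    positivity
  have hhc : Continuous (hwt m n) := by
    unfold hwt
    fun_prop
  have hpt : ∀ t, (derivWithin w (Icc 0 Real.pi) t ^ 2
      + (N * (N - 2) / 4 : ℝ) / 4 * w t ^ 2) * hwt m n t = F t * (hwt m n t / 4) := fun t => by
    simp only [hF_def]
    ring
  simp_rw [hpt]
  change ∫ z : sphere (0 : EuclideanSpace ℝ (Fin (N + 1))) 1, F (qsplit N m z) ∂_ = _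
  rw [intervalIntegral.integral_of_le Real.pi_pos.le, integral_Ioc_eq_integral_Ioo,
    integral_eq_lintegral_of_nonneg_ae (.of_forall fun z => hF0 _) hFq.aestronglyMeasurable,
    integral_eq_lintegral_of_nonneg_ae]
  · congr 1
    have := lintegral_qsplit N m n hm hn hmn hcut.ennreal_ofReal
    calc
      _ = _ := lintegral_congr fun z => by rw [indicator_of_mem (hq_mem _)]
      _ = _ := this
      _ = _ := setLIntegral_congr_fun measurableSet_Ioo fun t ht => by
        rw [indicator_of_mem (Ioo_subset_Icc_self ht), ENNReal.ofReal_mul (hF0 t)]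
  · refine (ae_restrict_iff' measurableSet_Ioo).2 (.of_forall fun t ht => ?_)
    exact mul_nonneg (hF0 t) (div_nonneg (hh0 t ht) (by norm_num))
  · exact ((hFc.mono Ioo_subset_Icc_self).mul
      (hhc.div_const 4).continuousOn).aestronglyMeasurable measurableSet_Ioo
end

section
/- For every nonnegative measurable function θ : [−1,1] → ℝ one has ∫_{𝕊^N} θ(|z₁|² − |z₂|²) dσ(z) = (1/4)·∫₀^π θ(cos t)·h(t) dt. -/
/-!
The function `ballProfile g (|z₁|², |z₂|²)` on `ℝ^{m+n}` equals `g ((|z₁|² - |z₂|²) / |z|²)` on the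
unit ball and `0` elsewhere. Its Lebesgue integral is computed in two ways.

* In polar coordinates on `ℝ^{m+n}` it is the integral of `g (|z₁|² - |z₂|²)` over the sphere times
  `radialMass (m + n)`, because the integrand is homogeneous of degree `0` inside the ball
  (`lintegral_ballProfile_sphere`).
* By Fubini and polar coordinates in `ℝ^m` and in `ℝ^n` it is an integral over the quadrant of radii
  `(|z₁|, |z₂|) = (ρ cos t, ρ sin t)`. Planar polar coordinates there give the same factor
  `radialMass (m + n)` times
  `|𝕊^{m-1}| |𝕊^{n-1}| ∫ cos^{m-1} t sin^{n-1} t g (cos 2t) dt` over `0 < t < π/2`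
  (`lintegral_ballProfile_blocks`).

The common factor is finite and nonzero, so it cancels, and the substitution `t ↦ t / 2` gives the
weight `h / 4`.
-/

open MeasureTheory
open scoped ENNReal

/-! ### Polar coordinates and the block decomposition -/

/-- Integration in polar coordinates `x = r • ω` on `ℝ^d`, for functions that need not be radial. -/
theorem lintegral_polar {d : ℕ} (hd : 0 < d) {f : EuclideanSpace ℝ (Fin d) → ℝ≥0∞}
    (hf : Measurable f) :
    ∫⁻ x, f x = ∫⁻ ω : Metric.sphere (0 : EuclideanSpace ℝ (Fin d)) 1,
      (∫⁻ r in Set.Ioi (0 : ℝ), ENNReal.ofReal (r ^ (d - 1)) * f (r • (ω : EuclideanSpace ℝ (Fin d))))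
        ∂((volume : Measure (EuclideanSpace ℝ (Fin d))).toSphere) := by
  have : Nonempty (Fin d) := ⟨⟨0, hd⟩⟩
  let E := EuclideanSpace ℝ (Fin d)
  change Measurable (f : E → ℝ≥0∞) at hf
  have hsm : Measurable fun p : Metric.sphere (0 : E) 1 × Set.Ioi (0 : ℝ) =>
      f ((p.2 : ℝ) • (p.1 : E)) :=
    hf.comp (by fun_prop : Measurable fun p : Metric.sphere (0 : E) 1 × Set.Ioi (0 : ℝ) =>
      (p.2 : ℝ) • (p.1 : E))
  have h1 : ∫⁻ x, f x = ∫⁻ x : ({(0 : E)}ᶜ : Set E), f x ∂((volume : Measure E).comap (↑)) := by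
    rw [lintegral_subtype_comap (measurableSet_singleton (0 : E)).compl, restrict_compl_singleton]
  have h2 := ((volume : Measure E).measurePreserving_homeomorphUnitSphereProd).lintegral_comp_emb
    (Homeomorph.measurableEmbedding _) (fun p => f ((p.2 : ℝ) • (p.1 : E)))
  have h3 : ∀ x : ({(0 : E)}ᶜ : Set E),
      f (((homeomorphUnitSphereProd E x).2 : ℝ) • ((homeomorphUnitSphereProd E x).1 : E)) = f x := by
    intro x
    have := congrArg Subtype.val ((homeomorphUnitSphereProd E).symm_apply_apply x)
    rw [homeomorphUnitSphereProd_symm_apply_coe] at this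
    rw [this]
  simp only [h3] at h2
  refine (h1.trans h2).trans ?_
  rw [lintegral_prod _ hsm.aemeasurable]
  refine lintegral_congr fun ω => ?_
  have hω : Measurable fun r : ℝ => f (r • (ω : E)) :=
    hf.comp (by fun_prop : Measurable fun r : ℝ => r • (ω : E))
  rw [Measure.volumeIoiPow]
  refine (lintegral_withDensity_eq_lintegral_mul _ (by fun_prop)
    (hω.comp measurable_subtype_coe)).trans ?_
  have := lintegral_subtype_comap (μ := (volume : Measure ℝ)) (measurableSet_Ioi (a := (0 : ℝ)))
    (fun r => ENNReal.ofReal (r ^ (d - 1)) * f (r • (ω : E)))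
  simpa [E] using this

theorem lintegral_radial {d : ℕ} (hd : 0 < d) {f : ℝ → ℝ≥0∞} (hf : Measurable f) :
    ∫⁻ x : EuclideanSpace ℝ (Fin d), f ‖x‖ = ENNReal.ofReal (sphereVol d) *
      ∫⁻ r in Set.Ioi (0 : ℝ), ENNReal.ofReal (r ^ (d - 1)) * f r := by
  rw [lintegral_polar hd (f := fun x => f ‖x‖) (by fun_prop), sphereVol,
    ENNReal.ofReal_toReal (measure_ne_top _ _), mul_comm, ← lintegral_const]
  refine lintegral_congr fun ω => setLIntegral_congr_fun measurableSet_Ioi fun r hr => ?_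
  have : ‖(ω : EuclideanSpace ℝ (Fin d))‖ = 1 := by simp
  simp only [norm_smul, this, mul_one, Real.norm_eq_abs, abs_of_pos (Set.mem_Ioi.1 hr)]

/-- Fubini for the splitting `ℝ^{m+n} = ℝ^m × ℝ^n`, for functions of the squared norms of the two
blocks. -/
theorem lintegral_blocks (m n : ℕ) {H : ℝ × ℝ → ℝ≥0∞} (hH : Measurable H) :
    ∫⁻ z : EuclideanSpace ℝ (Fin (m + n)),
        H (∑ i : Fin (m + n), (if (i : ℕ) < m then z i ^ 2 else 0), ∑ i : Fin (m + n), if (i : ℕ) < m then 0 else z i ^ 2)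
      = ∫⁻ x : EuclideanSpace ℝ (Fin m), ∫⁻ y : EuclideanSpace ℝ (Fin n),
          H (‖x‖ ^ 2, ‖y‖ ^ 2) := by
  have e1 := volume_measurePreserving_piCongrLeft (fun _ : Fin (m + n) => ℝ)
    (finSumFinEquiv : Fin m ⊕ Fin n ≃ Fin (m + n))
  have e2 := volume_measurePreserving_sumPiEquivProdPi_symm (fun _ : Fin m ⊕ Fin n => ℝ)
  have e3 := (PiLp.volume_preserving_ofLp (Fin m)).prod (PiLp.volume_preserving_ofLp (Fin n))
  have e := ((PiLp.volume_preserving_toLp (Fin (m + n))).comp e1).comp (e2.comp e3)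
  have hF : Measurable fun z : EuclideanSpace ℝ (Fin (m + n)) =>
      H (∑ i : Fin (m + n), (if (i : ℕ) < m then z i ^ 2 else 0), ∑ i : Fin (m + n), if (i : ℕ) < m then 0 else z i ^ 2) := by
    refine hH.comp (Measurable.prodMk ?_ ?_) <;>
    · refine Finset.measurable_sum _ fun i _ => ?_
      split_ifs <;> fun_prop
  rw [← e.lintegral_comp hF]
  refine (lintegral_prod _ (hF.comp e.measurable).aemeasurable).trans ?_
  refine lintegral_congr fun x => lintegral_congr fun y => ?_
  have k1 : ∀ (p : (Fin m → ℝ) × (Fin n → ℝ)) (i : Fin m),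
      MeasurableEquiv.piCongrLeft (fun _ : Fin (m + n) => ℝ) finSumFinEquiv
        ((MeasurableEquiv.sumPiEquivProdPi (fun _ : Fin m ⊕ Fin n => ℝ)).symm p) (Fin.castAdd n i)
        = p.1 i := by
    intro p i
    rw [← finSumFinEquiv_apply_left, MeasurableEquiv.coe_piCongrLeft,
      Equiv.piCongrLeft_apply_apply]
    rfl
  have k2 : ∀ (p : (Fin m → ℝ) × (Fin n → ℝ)) (i : Fin n),
      MeasurableEquiv.piCongrLeft (fun _ : Fin (m + n) => ℝ) finSumFinEquiv
        ((MeasurableEquiv.sumPiEquivProdPi (fun _ : Fin m ⊕ Fin n => ℝ)).symm p) (Fin.natAdd m i)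
        = p.2 i := by
    intro p i
    rw [← finSumFinEquiv_apply_right, MeasurableEquiv.coe_piCongrLeft,
      Equiv.piCongrLeft_apply_apply]
    rfl
  simp [Fin.sum_univ_add, k1, k2, EuclideanSpace.norm_sq_eq]

/-- Planar polar coordinates restricted to the open first quadrant. -/
theorem lintegral_quadrant_s9 (f : ℝ × ℝ → ℝ≥0∞) :
    ∫⁻ p in Set.Ioi (0 : ℝ) ×ˢ Set.Ioi (0 : ℝ), f p
      = ∫⁻ p in Set.Ioi (0 : ℝ) ×ˢ Set.Ioo (0 : ℝ) (Real.pi / 2),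
          ENNReal.ofReal p.1 * f (p.1 * Real.cos p.2, p.1 * Real.sin p.2) := by
  have hQ : MeasurableSet (Set.Ioi (0 : ℝ) ×ˢ Set.Ioi (0 : ℝ)) :=
    measurableSet_Ioi.prod measurableSet_Ioi
  have hS : MeasurableSet (Set.Ioi (0 : ℝ) ×ˢ Set.Ioo (0 : ℝ) (Real.pi / 2)) :=
    measurableSet_Ioi.prod measurableSet_Ioo
  have hT : MeasurableSet polarCoord.target := polarCoord.open_target.measurableSet
  rw [← lintegral_indicator hQ, ← lintegral_comp_polarCoord_symm, ← lintegral_indicator hT,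
    ← lintegral_indicator hS]
  refine lintegral_congr fun p => ?_
  obtain ⟨r, t⟩ := p
  have hpi := Real.pi_pos
  by_cases h : (r, t) ∈ Set.Ioi (0 : ℝ) ×ˢ Set.Ioo (0 : ℝ) (Real.pi / 2)
  · have h' := h
    simp only [Set.mem_prod, Set.mem_Ioi, Set.mem_Ioo] at h'
    obtain ⟨hr, ht0, ht1⟩ := h'
    have hc := Real.cos_pos_of_mem_Ioo (x := t) ⟨by linarith, ht1⟩
    have hs := Real.sin_pos_of_pos_of_lt_pi ht0 (by linarith)
    rw [Set.indicator_of_mem h, Set.indicator_of_mem, polarCoord_symm_apply, Set.indicator_of_mem,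
      smul_eq_mul]
    · exact ⟨mul_pos hr hc, mul_pos hr hs⟩
    · simp only [polarCoord_target, Set.mem_prod, Set.mem_Ioi, Set.mem_Ioo]
      exact ⟨hr, by linarith, by linarith⟩
  · rw [Set.indicator_of_notMem h]
    by_cases h2 : (r, t) ∈ polarCoord.target
    · rw [Set.indicator_of_mem h2, polarCoord_symm_apply, Set.indicator_of_notMem, smul_zero]
      simp only [polarCoord_target, Set.mem_prod, Set.mem_Ioi, Set.mem_Ioo] at h2 h ⊢
      rintro ⟨hc, hs⟩
      obtain ⟨hr, ht0, ht1⟩ := h2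
      have hc := (pos_iff_pos_of_mul_pos hc).1 hr
      have hs := (pos_iff_pos_of_mul_pos hs).1 hr
      refine h ⟨hr, ?_, ?_⟩
      · by_contra! hle
        linarith [Real.sin_nonpos_of_nonpos_of_neg_pi_le hle ht0.le]
      · by_contra! hle
        linarith [Real.cos_nonpos_of_pi_div_two_le_of_le hle (by linarith)]
    · rw [Set.indicator_of_notMem h2]

theorem lintegral_halfAngle (f : ℝ → ℝ≥0∞) :
    ∫⁻ t in Set.Ioo (0 : ℝ) (Real.pi / 2), f (2 * t)
      = (1 / 2 : ℝ≥0∞) * ∫⁻ t in Set.Ioc (0 : ℝ) Real.pi, f t := by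
  have himg : (fun t : ℝ => 2 * t) '' Set.Ioo 0 (Real.pi / 2) = Set.Ioo 0 Real.pi := by
    rw [Set.image_mul_left_Ioo two_pos]; congr 1 <;> ring
  have h := lintegral_image_eq_lintegral_abs_deriv_mul (s := Set.Ioo (0 : ℝ) (Real.pi / 2))
    (f := fun t => 2 * t) (f' := fun _ => 2) measurableSet_Ioo
    (fun x _ => by simpa using ((hasDerivAt_id x).const_mul (2 : ℝ)).hasDerivWithinAt)
    (fun x _ y _ h => by simpa using h) f
  rw [himg, lintegral_const_mul' _ _ ENNReal.ofReal_ne_top] at h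
  rw [← Measure.restrict_congr_set Ioo_ae_eq_Ioc, h, ← mul_assoc]
  simp [ENNReal.inv_mul_cancel]

/-! ### The radial constant -/

/-- `∫₀^1 r^{d-1} dr`, the radial factor of the volume of the unit ball of `ℝ^d`. It is written with
the condition `r ^ 2 < 1` because that is the form in which it arises from `ballProfile`. -/
noncomputable def radialMass (d : ℕ) : ℝ≥0∞ :=
  ∫⁻ r in Set.Ioi (0 : ℝ), ENNReal.ofReal (r ^ (d - 1)) * if r ^ 2 < 1 then 1 else 0

theorem measurable_radialDensity (d : ℕ) :
    Measurable fun r : ℝ => ENNReal.ofReal (r ^ (d - 1)) * if r ^ 2 < 1 then 1 else 0 :=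
    Measurable.mul (by fun_prop) (Measurable.ite (measurableSet_lt (by fun_prop) (by fun_prop))
      (by fun_prop) (by fun_prop))

theorem radialMass_eq (d : ℕ) :
    radialMass d = ∫⁻ r in Set.Ioo (0 : ℝ) 1, ENNReal.ofReal (r ^ (d - 1)) := by
  rw [radialMass, ← lintegral_indicator measurableSet_Ioi, ← lintegral_indicator measurableSet_Ioo]
  refine lintegral_congr fun r => ?_
  by_cases h0 : 0 < r
  · by_cases h1 : r < 1
    · have : r ^ 2 < 1 := by nlinarith
      simp only [Set.indicator, Set.mem_Ioi, Set.mem_Ioo, h0, h1, this, if_true, and_true, mul_one]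
    · have : ¬ r ^ 2 < 1 := by nlinarith
      simp only [Set.indicator, Set.mem_Ioi, Set.mem_Ioo, h0, h1, this, if_true, if_false, and_false,
        mul_zero]
  · simp [h0]

theorem radialMass_ne_zero (d : ℕ) : radialMass d ≠ 0 := by
  rw [radialMass_eq]
  refine ne_of_gt ((setLIntegral_pos_iff (by fun_prop)).2 ?_)
  have : Set.Ioo (0 : ℝ) 1 ⊆
      (Function.support fun r : ℝ => ENNReal.ofReal (r ^ (d - 1))) ∩ Set.Ioo 0 1 :=
    fun r hr => ⟨by simpa using pow_pos hr.1 _, hr⟩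
  exact lt_of_lt_of_le (by simp) (measure_mono this)

theorem radialMass_ne_top (d : ℕ) : radialMass d ≠ ∞ := by
  rw [radialMass_eq]
  refine ne_top_of_le_ne_top (b := ∫⁻ r in Set.Ioo (0 : ℝ) 1, 1) (by simp) ?_
  refine setLIntegral_mono measurable_const fun r hr => ?_
  rw [← ENNReal.ofReal_one]
  exact ENNReal.ofReal_le_ofReal (pow_le_one₀ hr.1.le hr.2.le)

/-! ### Two evaluations of the integral of a ball profile -/

/-- The function of `(a, b) = (|z₁|², |z₂|²)` equal on the open unit ball to
`g ((a - b) / (a + b))` and vanishing outside it. -/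
noncomputable def ballProfile (g : ℝ → ℝ≥0∞) (p : ℝ × ℝ) : ℝ≥0∞ :=
  if p.1 + p.2 < 1 then g ((p.1 - p.2) / (p.1 + p.2)) else 0

theorem measurable_ballProfile {g : ℝ → ℝ≥0∞} (hg : Measurable g) :
    Measurable (ballProfile g) := by
  refine Measurable.ite (measurableSet_lt (by fun_prop) (by fun_prop)) (by fun_prop) (by fun_prop)

/-- On the ray through a unit vector, `ballProfile g` splits as a radial factor times `g` of the
value `a - b` at that unit vector. -/
theorem ballProfile_scale (g : ℝ → ℝ≥0∞) {r a b : ℝ} (hr : 0 < r) (hab : a + b = 1) :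
    ballProfile g (r ^ 2 * a, r ^ 2 * b) = (if r ^ 2 < 1 then 1 else 0) * g (a - b) := by
  have h1 : r ^ 2 * a + r ^ 2 * b = r ^ 2 := by rw [← mul_add, hab, mul_one]
  have h2 : (r ^ 2 * a - r ^ 2 * b) / r ^ 2 = a - b := by field_simp
  simp only [ballProfile, h1, h2]
  split_ifs <;> simp

/-- The integral of `ballProfile g` over `ℝ^K` in polar coordinates: the spherical integral of
`g (|z₁|² - |z₂|²)` times the radial constant. -/
theorem lintegral_ballProfile_sphere (m : ℕ) {K : ℕ} (hK : 0 < K) {g : ℝ → ℝ≥0∞}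
    (hg : Measurable g) :
    ∫⁻ z : EuclideanSpace ℝ (Fin K), ballProfile g
        (∑ i : Fin K, (if (i : ℕ) < m then z i ^ 2 else 0), ∑ i : Fin K, if (i : ℕ) < m then 0 else z i ^ 2)
      = radialMass K * ∫⁻ z : Metric.sphere (0 : EuclideanSpace ℝ (Fin K)) 1,
          g ((∑ i : Fin K, if (i : ℕ) < m then (z : EuclideanSpace ℝ (Fin K)) i ^ 2 else 0)
            - ∑ i : Fin K, if (i : ℕ) < m then 0 else (z : EuclideanSpace ℝ (Fin K)) i ^ 2)
          ∂((volume : Measure (EuclideanSpace ℝ (Fin K))).toSphere) := by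
  have hF : Measurable fun z : EuclideanSpace ℝ (Fin K) => ballProfile g
      (∑ i : Fin K, (if (i : ℕ) < m then z i ^ 2 else 0), ∑ i : Fin K, if (i : ℕ) < m then 0 else z i ^ 2) := by
    refine (measurable_ballProfile hg).comp (Measurable.prodMk ?_ ?_) <;>
    · refine Finset.measurable_sum _ fun i _ => ?_
      split_ifs <;> fun_prop
  rw [lintegral_polar hK hF, ← lintegral_const_mul' _ _ (radialMass_ne_top K)]
  refine lintegral_congr fun ω => ?_
  rw [radialMass, ← lintegral_mul_const _ (measurable_radialDensity K)]
  refine setLIntegral_congr_fun measurableSet_Ioi fun r hr => ?_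
  have hω : (∑ i : Fin K, if (i : ℕ) < m then (ω : EuclideanSpace ℝ (Fin K)) i ^ 2 else 0)
      + (∑ i : Fin K, if (i : ℕ) < m then 0 else (ω : EuclideanSpace ℝ (Fin K)) i ^ 2) = 1 := by
    have h1 : ‖(ω : EuclideanSpace ℝ (Fin K))‖ ^ 2 = 1 := by
      have : ‖(ω : EuclideanSpace ℝ (Fin K))‖ = 1 := by simp
      rw [this, one_pow]
    rw [EuclideanSpace.real_norm_sq_eq] at h1
    refine Eq.trans ?_ h1
    rw [← Finset.sum_add_distrib]
    exact Finset.sum_congr rfl fun i _ => by split_ifs <;> simp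
  have := ballProfile_scale g (Set.mem_Ioi.1 hr) hω
  simp only [Finset.mul_sum, mul_ite, mul_zero] at this
  simp only [PiLp.smul_apply, smul_eq_mul, mul_pow]
  rw [this, mul_assoc]

/-- The integral of `ballProfile g` over `ℝ^m × ℝ^n`, computed by polar coordinates in each block and
then in the quadrant of the pair of radii `(‖x‖, ‖y‖)`. -/
theorem lintegral_ballProfile_blocks {m n : ℕ} (hm : 0 < m) (hn : 0 < n) {g : ℝ → ℝ≥0∞}
    (hg : Measurable g) :
    ∫⁻ x : EuclideanSpace ℝ (Fin m), ∫⁻ y : EuclideanSpace ℝ (Fin n),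
        ballProfile g (‖x‖ ^ 2, ‖y‖ ^ 2)
      = radialMass (m + n) * (ENNReal.ofReal (sphereVol m) * (ENNReal.ofReal (sphereVol n) *
          ∫⁻ t in Set.Ioo (0 : ℝ) (Real.pi / 2),
            ENNReal.ofReal (Real.cos t ^ (m - 1) * Real.sin t ^ (n - 1)) * g (Real.cos (2 * t)))) := by
  have hB := measurable_ballProfile hg
  have h1 : ∀ x : EuclideanSpace ℝ (Fin m), ∫⁻ y : EuclideanSpace ℝ (Fin n),
      ballProfile g (‖x‖ ^ 2, ‖y‖ ^ 2) = (fun r : ℝ => ENNReal.ofReal (sphereVol n) *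
        ∫⁻ s in Set.Ioi (0 : ℝ), ENNReal.ofReal (s ^ (n - 1)) * ballProfile g (r ^ 2, s ^ 2)) ‖x‖ :=
    fun x => lintegral_radial hn (f := fun s => ballProfile g (‖x‖ ^ 2, s ^ 2)) (by fun_prop)
  have hm1 : Measurable fun r : ℝ =>
      ∫⁻ s in Set.Ioi (0 : ℝ), ENNReal.ofReal (s ^ (n - 1)) * ballProfile g (r ^ 2, s ^ 2) :=
    Measurable.lintegral_prod_right' (f := fun p : ℝ × ℝ =>
      ENNReal.ofReal (p.2 ^ (n - 1)) * ballProfile g (p.1 ^ 2, p.2 ^ 2)) (by fun_prop)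
  simp only [h1]
  rw [lintegral_radial hm (f := fun r : ℝ => ENNReal.ofReal (sphereVol n) *
        ∫⁻ s in Set.Ioi (0 : ℝ), ENNReal.ofReal (s ^ (n - 1)) * ballProfile g (r ^ 2, s ^ 2))
      (by fun_prop)]
  simp only [mul_left_comm _ (ENNReal.ofReal (sphereVol n))]
  rw [lintegral_const_mul' _ _ ENNReal.ofReal_ne_top]
  have h4 : ∀ r : ℝ, ENNReal.ofReal (r ^ (m - 1)) *
      ∫⁻ s in Set.Ioi (0 : ℝ), ENNReal.ofReal (s ^ (n - 1)) * ballProfile g (r ^ 2, s ^ 2)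
      = ∫⁻ s in Set.Ioi (0 : ℝ), ENNReal.ofReal (r ^ (m - 1)) *
          (ENNReal.ofReal (s ^ (n - 1)) * ballProfile g (r ^ 2, s ^ 2)) :=
    fun r => (lintegral_const_mul' _ _ ENNReal.ofReal_ne_top).symm
  simp only [h4]
  have h2 := setLIntegral_prod (μ := (volume : Measure ℝ)) (ν := (volume : Measure ℝ))
    (s := Set.Ioi 0) (t := Set.Ioi 0) (fun p : ℝ × ℝ => ENNReal.ofReal (p.1 ^ (m - 1)) *
      (ENNReal.ofReal (p.2 ^ (n - 1)) * ballProfile g (p.1 ^ 2, p.2 ^ 2)))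
    (Measurable.aemeasurable (by fun_prop))
  have hS : MeasurableSet (Set.Ioi (0 : ℝ) ×ˢ Set.Ioo (0 : ℝ) (Real.pi / 2)) :=
    measurableSet_Ioi.prod measurableSet_Ioo
  have h3 : ∫⁻ p in Set.Ioi (0 : ℝ) ×ˢ Set.Ioi (0 : ℝ), ENNReal.ofReal (p.1 ^ (m - 1)) *
        (ENNReal.ofReal (p.2 ^ (n - 1)) * ballProfile g (p.1 ^ 2, p.2 ^ 2))
      = radialMass (m + n) * ∫⁻ t in Set.Ioo (0 : ℝ) (Real.pi / 2),
          ENNReal.ofReal (Real.cos t ^ (m - 1) * Real.sin t ^ (n - 1)) * g (Real.cos (2 * t)) := by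
    rw [lintegral_quadrant_s9, radialMass,
      ← lintegral_prod_mul (measurable_radialDensity (m + n)).aemeasurable (Measurable.aemeasurable (by fun_prop)),
      Measure.prod_restrict]
    refine setLIntegral_congr_fun hS fun p hp => ?_
    obtain ⟨r, t⟩ := p
    obtain ⟨hr, ht⟩ := hp
    simp only [Set.mem_Ioi, Set.mem_Ioo] at hr ht
    have hc := Real.cos_pos_of_mem_Ioo (x := t) ⟨by linarith, ht.2⟩
    have hs := Real.sin_pos_of_pos_of_lt_pi ht.1 (by linarith)
    simp only [mul_pow]
    rw [← mul_pow, ← mul_pow, mul_pow, mul_pow, ballProfile_scale g hr (Real.cos_sq_add_sin_sq t),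
      ← Real.cos_two_mul']
    have hpow : r * (r ^ (m - 1) * Real.cos t ^ (m - 1)) * (r ^ (n - 1) * Real.sin t ^ (n - 1))
        = r ^ (m + n - 1) * (Real.cos t ^ (m - 1) * Real.sin t ^ (n - 1)) := by
      have : m + n - 1 = 1 + (m - 1) + (n - 1) := by omega
      rw [this, pow_add, pow_add]; ring
    have hpow' := congrArg ENNReal.ofReal hpow
    rw [ENNReal.ofReal_mul (by positivity), ENNReal.ofReal_mul (by positivity),
      ENNReal.ofReal_mul (p := r ^ (m + n - 1)) (by positivity)] at hpow'
    simp only [← mul_assoc]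
    rw [hpow']
    ring
  rw [← h2, ← Measure.volume_eq_prod, h3]
  ring

/-! ### The distribution of `|z₁|² - |z₂|²` on the sphere -/

/-- For every nonnegative measurable `θ : [−1,1] → ℝ`,
`∫_{𝕊^N} θ(|z₁|² − |z₂|²) dσ(z) = (1/4)∫₀^π θ(cos t) h(t) dt`, where `z₁` collects the
first `m` coordinates of `z` and `z₂` the remaining `n` coordinates. -/
theorem integral_theta_orbit_map (N m n : ℕ) (hN : 3 ≤ N)
    (hm : 2 ≤ m) (hn : 2 ≤ n) (hmn : m + n = N + 1)
    (θ : ℝ → ℝ) (hmeas : Measurable θ) (hpos : ∀ s, 0 ≤ θ s) :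
    ∫⁻ z : Metric.sphere (0 : EuclideanSpace ℝ (Fin (N + 1))) 1,
        ENNReal.ofReal (θ ((∑ i : Fin (N + 1), if (i : ℕ) < m then (z : EuclideanSpace ℝ (Fin (N + 1))) i ^ 2 else 0)
          - ∑ i : Fin (N + 1), if (i : ℕ) < m then 0 else (z : EuclideanSpace ℝ (Fin (N + 1))) i ^ 2))
        ∂((volume : Measure (EuclideanSpace ℝ (Fin (N + 1)))).toSphere)
      = (1 / 4 : ℝ≥0∞) * ∫⁻ t in Set.Ioc (0 : ℝ) Real.pi,
          ENNReal.ofReal (θ (Real.cos t) * hwt m n t) := by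
  have hg : Measurable fun s => ENNReal.ofReal (θ s) := by fun_prop
  generalize N + 1 = K at hmn
  subst hmn
  have key := lintegral_ballProfile_sphere m (K := m + n) (by omega) hg
  rw [lintegral_blocks m n (measurable_ballProfile hg),
    lintegral_ballProfile_blocks (by omega) (by omega) hg] at key
  rw [← (ENNReal.mul_right_inj (radialMass_ne_zero _) (radialMass_ne_top _)).1 key]
  have hh := lintegral_halfAngle fun t => ENNReal.ofReal
    (Real.cos (t / 2) ^ (m - 1) * Real.sin (t / 2) ^ (n - 1)) * ENNReal.ofReal (θ (Real.cos t))
  simp only [mul_div_cancel_left₀ _ (two_ne_zero' ℝ)] at hh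
  rw [hh]
  have hv : ∀ d, 0 ≤ sphereVol d := fun d => ENNReal.toReal_nonneg
  have hw : ∫⁻ t in Set.Ioc (0 : ℝ) Real.pi, ENNReal.ofReal (θ (Real.cos t) * hwt m n t)
      = (2 * ENNReal.ofReal (sphereVol m) * ENNReal.ofReal (sphereVol n)) *
        ∫⁻ t in Set.Ioc (0 : ℝ) Real.pi,
          ENNReal.ofReal (Real.cos (t / 2) ^ (m - 1) * Real.sin (t / 2) ^ (n - 1)) *
            ENNReal.ofReal (θ (Real.cos t)) := by
    rw [← lintegral_const_mul' _ _ (by finiteness)]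
    refine setLIntegral_congr_fun measurableSet_Ioc fun t ht => ?_
    have hc : 0 ≤ Real.cos (t / 2) :=
      Real.cos_nonneg_of_mem_Icc ⟨by linarith [ht.1, Real.pi_pos], by linarith [ht.2]⟩
    have hs : 0 ≤ Real.sin (t / 2) :=
      Real.sin_nonneg_of_nonneg_of_le_pi (by linarith [ht.1]) (by linarith [ht.2, Real.pi_pos])
    have e : θ (Real.cos t) * hwt m n t = 2 * sphereVol m * sphereVol n *
        ((Real.cos (t / 2) ^ (m - 1) * Real.sin (t / 2) ^ (n - 1)) * θ (Real.cos t)) := by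
      rw [hwt]; ring
    have h1 := hv m
    have h2 := hv n
    simp only [e]
    rw [ENNReal.ofReal_mul (by positivity), ENNReal.ofReal_mul (by positivity),
      ENNReal.ofReal_mul (by positivity), ENNReal.ofReal_mul (by positivity), ENNReal.ofReal_ofNat]
  have hq : (1 / 4 : ℝ≥0∞) * 2 = 1 / 2 := by
    rw [show (4 : ℝ≥0∞) = 2 * 2 by norm_num, one_div, one_div,
      ENNReal.mul_inv (by simp) (by simp), mul_assoc, ENNReal.inv_mul_cancel (by simp) (by simp),
      mul_one]
  rw [hw, ← hq]
  ring
end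

section
/- Define w : (0,π) → ℝ by w(t) = ln(−ln(t/(2π))) + ln(−ln((π−t)/(2π))). Then w is C¹ on (0,π), w(t) → +∞ as t → 0⁺ and as t → π⁻ (so w is unbounded), and nevertheless ∫₀^π ( |w'(t)|² + |w(t)|² ) h(t) dt < ∞. In particular, the weighted Sobolev space defined by the norm ‖w‖_h² = ∫₀^π (|w'|² + (a_N/4)|w|²) h dt contains functions that are singular at 0 and at π. -/
/-!
Write `f t = log (-log (t / 2π))`, so that `w t = f t + f (π - t)`. On `(0, π)` the ratio
`t / 2π` lies in `(0, 1/2)`, hence `-log (t / 2π) > log 2 > 1/2` and `f` is smooth, with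
`f' t = 1 / (t log (t / 2π))`.

Since `m, n ≥ 2`, the weight vanishes at least linearly at both ends: `h t ≤ A t` and
`h t ≤ A (π - t)` (`hwt_le_left`, `hwt_le_right`). Therefore `f'² h` is dominated near `0` by
`1 / (t log² (t / 2π))`, which is integrable because it is the derivative of the bounded monotone
function `-1 / log (t / 2π)` (`integrableOn_dom`), while `f² h` is bounded because
`t log² t` is (`sq_loglog_mul_le`). The endpoint `π` follows by the reflection `t ↦ π - t`.
-/

open MeasureTheory

section

open Real Set Filter Topology

/-- The singular profile `f t = log (-log (t / 2π))`. -/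
noncomputable def loglog (t : ℝ) : ℝ := Real.log (-Real.log (t / (2 * Real.pi)))

/-- The dominating function `1 / (t log² (t / 2π))`. -/
noncomputable def dom (t : ℝ) : ℝ := 1 / (t * Real.log (t / (2 * Real.pi)) ^ 2)

lemma half_lt_neg_log {t : ℝ} (h0 : 0 < t) (h1 : t ≤ π) : 1 / 2 < -Real.log (t / (2 * π)) := by
  have h2 : t / (2 * π) ≤ 2⁻¹ := by
    rw [div_le_iff₀ (by positivity)]; linarith
  have h3 := Real.log_le_log (by positivity) h2
  rw [Real.log_inv] at h3
  linarith [Real.log_two_gt_d9]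

lemma hasDerivAt_log_div {t : ℝ} (h0 : 0 < t) :
    HasDerivAt (fun t => Real.log (t / (2 * π))) (1 / t) t := by
  have hp := Real.pi_pos
  have h := ((hasDerivAt_id' t).div_const (2 * π)).log (by positivity)
  have e : 1 / t = 1 / (2 * π) / (t / (2 * π)) := by field_simp
  rw [e]
  exact h

lemma hasDerivAt_loglog {t : ℝ} (h0 : 0 < t) (h1 : t ≤ π) :
    HasDerivAt loglog (1 / (t * Real.log (t / (2 * π)))) t := by
  have hL := half_lt_neg_log h0 h1
  have hL' : Real.log (t / (2 * π)) ≠ 0 := by linarith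
  have h := (hasDerivAt_log_div h0).fun_neg.log (by linarith)
  have e : 1 / (t * Real.log (t / (2 * π))) = -(1 / t) / -Real.log (t / (2 * π)) := by
    field_simp
  rw [e]
  exact h

lemma contDiffOn_loglog : ContDiffOn ℝ 1 loglog (Ioo 0 π) := by
  have hp := Real.pi_pos
  refine ContDiffOn.log (ContDiffOn.neg (ContDiffOn.log (by fun_prop) ?_)) ?_
  · intro t ht
    have := ht.1
    positivity
  · intro t ht
    linarith [half_lt_neg_log ht.1 ht.2.le]

lemma tendsto_log_div_zero :
    Tendsto (fun t : ℝ => Real.log (t / (2 * π))) (𝓝[>] 0) atBot := by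
  have hp := Real.pi_pos
  refine Real.tendsto_log_nhdsGT_zero.comp (tendsto_nhdsWithin_iff.2 ⟨?_, ?_⟩)
  · have : Tendsto (fun t : ℝ => t / (2 * π)) (𝓝 0) (𝓝 (0 / (2 * π))) :=
      tendsto_id.div_const _
    rw [zero_div] at this
    exact this.mono_left nhdsWithin_le_nhds
  · filter_upwards [self_mem_nhdsWithin] with t ht
    have : 0 < t := ht
    exact div_pos this (by positivity)

lemma tendsto_loglog_zero : Tendsto loglog (𝓝[>] 0) atTop :=
  Real.tendsto_log_atTop.comp (tendsto_neg_atBot_atTop.comp tendsto_log_div_zero)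

/-- Near `0⁺` the reflected summand stays bounded, so `w` inherits the blow-up of `loglog`. -/
lemma tendsto_sum_zero :
    Tendsto (fun t => loglog t + loglog (π - t)) (𝓝[>] 0) atTop := by
  have hc : ContinuousAt loglog (π - 0) := by
    rw [sub_zero]; exact (hasDerivAt_loglog Real.pi_pos le_rfl).continuousAt
  have h2 : Tendsto (fun t : ℝ => π - t) (𝓝[>] 0) (𝓝 (π - 0)) :=
    (tendsto_const_nhds.sub tendsto_id).mono_left nhdsWithin_le_nhds
  exact tendsto_loglog_zero.atTop_add (hc.tendsto.comp h2)

lemma tendsto_sum_pi :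
    Tendsto (fun t => loglog t + loglog (π - t)) (𝓝[<] π) atTop := by
  have h : Tendsto (fun t : ℝ => π - t) (𝓝[<] π) (𝓝[>] 0) := by
    refine tendsto_nhdsWithin_iff.2 ⟨?_, ?_⟩
    · have : Tendsto (fun t : ℝ => π - t) (𝓝 π) (𝓝 (π - π)) :=
        tendsto_const_nhds.sub tendsto_id
      rw [sub_self] at this
      exact this.mono_left nhdsWithin_le_nhds
    · filter_upwards [self_mem_nhdsWithin] with t ht
      have : t < π := ht
      exact sub_pos.2 this
  refine (tendsto_sum_zero.comp h).congr fun t => ?_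
  simp only [Function.comp, sub_sub_cancel]
  ring

/-- `dom` is the derivative of `-1 / log (t / 2π)`, which is continuous up to `0`. -/
lemma integrableOn_dom : IntegrableOn dom (Ioo 0 π) := by
  have hp := Real.pi_pos
  have key : IntegrableOn dom (Ioc 0 π) := by
    refine intervalIntegral.integrableOn_deriv_of_nonneg
      (g := fun t => -(Real.log (t / (2 * π)))⁻¹) ?_ ?_ ?_
    · intro t ht
      rcases eq_or_lt_of_le ht.1 with h0 | h0
      · subst h0
        -- Both `log 0 = 0` and `0⁻¹ = 0` are junk values, which here give the right limit `0`.
        rw [← continuousWithinAt_sdiff_self]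
        have h : Tendsto (fun t : ℝ => -(Real.log (t / (2 * π)))⁻¹) (𝓝[>] 0) (𝓝 (-0)) :=
          (tendsto_inv_atBot_zero.comp tendsto_log_div_zero).neg
        have h' : Tendsto (fun t : ℝ => -(Real.log (t / (2 * π)))⁻¹) (𝓝[Icc 0 π \ {0}] 0)
            (𝓝 (-0)) :=
          h.mono_left (nhdsWithin_mono _ fun x hx => lt_of_le_of_ne hx.1.1 (Ne.symm hx.2))
        simpa [ContinuousWithinAt] using h'
      · have := half_lt_neg_log h0 ht.2
        exact ((hasDerivAt_log_div h0).inv (by linarith)).neg.continuousAt.continuousWithinAt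
    · intro t ht
      have := half_lt_neg_log ht.1 ht.2.le
      have h0 := ht.1
      have hL' : Real.log (t / (2 * π)) ≠ 0 := by linarith
      have e : dom t = -(-(1 / t) / Real.log (t / (2 * π)) ^ 2) := by
        unfold dom
        field_simp
      rw [e]
      exact ((hasDerivAt_log_div h0).fun_inv hL').fun_neg
    · intro t ht
      have := ht.1
      change 0 ≤ 1 / (t * Real.log (t / (2 * π)) ^ 2)
      positivity
  exact key.mono_set Ioo_subset_Ioc_self

lemma integrableOn_dom_reflect : IntegrableOn (fun t => dom (π - t)) (Ioo 0 π) := by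
  have h := integrableOn_dom
  have hmp := Measure.measurePreserving_sub_left (volume : Measure ℝ) π
  have he : MeasurableEmbedding (fun t : ℝ => π - t) :=
    (Homeomorph.subLeft π).measurableEmbedding
  have := (hmp.integrableOn_comp_preimage he (f := dom) (s := Ioo 0 π)).2 h
  simpa [Set.preimage_const_sub_Ioo, Function.comp_def] using this

lemma sq_loglog_mul_le {t : ℝ} (h0 : 0 < t) (h1 : t ≤ π) : loglog t ^ 2 * t ≤ 9 * π := by
  have hp := Real.pi_pos
  have hL := half_lt_neg_log h0 h1
  set x := -Real.log (t / (2 * π)) with hx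
  have hx0 : 0 < x := by linarith
  have hu : 0 < t / (2 * π) := by positivity
  -- `-log u = 2 log (1 / √u) ≤ 2 / √u`, so `u log² u ≤ 4`.
  have hs : 0 < √(t / (2 * π)) := Real.sqrt_pos.2 hu
  have h2 : x ≤ 2 * (√(t / (2 * π)))⁻¹ := by
    have := Real.log_le_sub_one_of_pos (inv_pos.2 hs)
    rw [Real.log_inv, Real.log_sqrt hu.le] at this
    linarith
  have h3 : x ^ 2 * t ≤ 8 * π := by
    have h4 : x ^ 2 ≤ (2 * (√(t / (2 * π)))⁻¹) ^ 2 := by gcongr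
    rw [mul_pow, inv_pow, Real.sq_sqrt hu.le, inv_div] at h4
    calc x ^ 2 * t ≤ 2 ^ 2 * (2 * π / t) * t := by gcongr
      _ = 8 * π := by field_simp; ring
  have h5 : Real.log x ≤ x := (Real.log_le_sub_one_of_pos hx0).trans (by linarith)
  have h6 : -1 ≤ Real.log x := by
    have := Real.one_sub_inv_le_log_of_pos hx0
    have : x⁻¹ ≤ 2 := by
      rw [inv_le_comm₀ hx0 (by norm_num)]; linarith
    linarith
  have h7 : Real.log x ^ 2 ≤ 1 + x ^ 2 := by
    rcases le_total 0 (Real.log x) with h | h <;> nlinarith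
  calc loglog t ^ 2 * t = Real.log x ^ 2 * t := rfl
    _ ≤ (1 + x ^ 2) * t := by gcongr
    _ ≤ 9 * π := by linarith

/-- The constant `A` in the linear bounds on the weight. -/
noncomputable def wtConst (m n : ℕ) : ℝ := 2 * sphereVol m * sphereVol n

lemma wtConst_nonneg (m n : ℕ) : 0 ≤ wtConst m n :=
  mul_nonneg (mul_nonneg zero_le_two ENNReal.toReal_nonneg) ENNReal.toReal_nonneg

lemma trig_bounds {t : ℝ} (ht : t ∈ Ioo 0 π) :
    0 ≤ Real.cos (t / 2) ∧ 0 ≤ Real.sin (t / 2) ∧ Real.sin (t / 2) ≤ t ∧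
      Real.cos (t / 2) ≤ π - t := by
  obtain ⟨h0, h1⟩ := ht
  refine ⟨Real.cos_nonneg_of_mem_Icc ⟨by linarith, by linarith⟩,
    Real.sin_nonneg_of_nonneg_of_le_pi (by linarith) (by linarith), ?_, ?_⟩
  · linarith [Real.sin_le (show 0 ≤ t / 2 by linarith)]
  · have := Real.sin_le (show 0 ≤ π / 2 - t / 2 by linarith)
    rw [Real.sin_pi_div_two_sub] at this
    linarith

lemma hwt_nonneg (m n : ℕ) {t : ℝ} (ht : t ∈ Ioo 0 π) : 0 ≤ hwt m n t := by
  obtain ⟨hc, hs, -, -⟩ := trig_bounds ht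
  exact mul_nonneg (mul_nonneg (wtConst_nonneg m n) (pow_nonneg hc _)) (pow_nonneg hs _)

lemma hwt_le_left {m n : ℕ} (hn : 2 ≤ n) {t : ℝ} (ht : t ∈ Ioo 0 π) :
    hwt m n t ≤ wtConst m n * t := by
  obtain ⟨hc, hs, hst, -⟩ := trig_bounds ht
  have h1 : Real.cos (t / 2) ^ (m - 1) ≤ 1 := pow_le_one₀ hc (Real.cos_le_one _)
  have h2 : Real.sin (t / 2) ^ (n - 1) ≤ t :=
    (pow_le_of_le_one hs (Real.sin_le_one _) (by omega)).trans hst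
  have hA := wtConst_nonneg m n
  calc hwt m n t = wtConst m n * Real.cos (t / 2) ^ (m - 1) * Real.sin (t / 2) ^ (n - 1) := rfl
    _ ≤ wtConst m n * 1 * t := by gcongr
    _ = _ := by ring

lemma hwt_le_right {m n : ℕ} (hm : 2 ≤ m) {t : ℝ} (ht : t ∈ Ioo 0 π) :
    hwt m n t ≤ wtConst m n * (π - t) := by
  obtain ⟨hc, hs, -, hct⟩ := trig_bounds ht
  have h1 : Real.sin (t / 2) ^ (n - 1) ≤ 1 := pow_le_one₀ hs (Real.sin_le_one _)
  have h2 : Real.cos (t / 2) ^ (m - 1) ≤ π - t :=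
    (pow_le_of_le_one hc (Real.cos_le_one _) (by omega)).trans hct
  have hA := wtConst_nonneg m n
  have h3 : 0 ≤ π - t := hc.trans hct
  calc hwt m n t = wtConst m n * Real.cos (t / 2) ^ (m - 1) * Real.sin (t / 2) ^ (n - 1) := rfl
    _ ≤ wtConst m n * (π - t) * 1 := by gcongr
    _ = _ := by ring

lemma energy_summand_le {t A H : ℝ} (h0 : 0 < t) (h1 : t ≤ π) (hA : 0 ≤ A) (hH : H ≤ A * t) :
    ((1 / (t * Real.log (t / (2 * π)))) ^ 2 + loglog t ^ 2) * H ≤ A * (dom t + 9 * π) := by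
  have hL := half_lt_neg_log h0 h1
  have hL' : Real.log (t / (2 * π)) ≠ 0 := by linarith
  calc ((1 / (t * Real.log (t / (2 * π)))) ^ 2 + loglog t ^ 2) * H
      ≤ ((1 / (t * Real.log (t / (2 * π)))) ^ 2 + loglog t ^ 2) * (A * t) := by gcongr
    _ = A * (dom t + loglog t ^ 2 * t) := by
        simp only [dom]
        field_simp
    _ ≤ A * (dom t + 9 * π) := by
        have := sq_loglog_mul_le h0 h1
        exact mul_le_mul_of_nonneg_left (by linarith) hA

lemma integrableOn_energy {m n : ℕ} (hm : 2 ≤ m) (hn : 2 ≤ n) :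
    IntegrableOn (fun t => ((deriv (fun s => loglog s + loglog (π - s)) t) ^ 2
      + (loglog t + loglog (π - t)) ^ 2) * hwt m n t) (Ioo 0 π) := by
  have hmeas : Measurable loglog := by unfold loglog; fun_prop
  have hmeas' : Measurable (hwt m n) := by unfold hwt; fun_prop
  set A := wtConst m n with hAdef
  have hA : 0 ≤ A := wtConst_nonneg m n
  have hc : IntegrableOn (fun _ : ℝ => 9 * π) (Ioo 0 π) :=
    integrableOn_const (by simp)
  have hbound : IntegrableOn (fun t => 2 * (A * (dom t + 9 * π)) + 2 * (A * (dom (π - t) + 9 * π)))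
      (Ioo 0 π) :=
    (((integrableOn_dom.add hc).const_mul A).const_mul 2).add
      (((integrableOn_dom_reflect.add hc).const_mul A).const_mul 2)
  refine Integrable.mono' hbound ?_ ?_
  · have := measurable_deriv (fun s => loglog s + loglog (π - s))
    exact Measurable.aestronglyMeasurable (by fun_prop)
  · refine (ae_restrict_iff' measurableSet_Ioo).2 (Eventually.of_forall fun t ht => ?_)
    have hH := hwt_nonneg m n ht
    rw [Real.norm_of_nonneg (by positivity)]
    have hd1 := hasDerivAt_loglog ht.1 ht.2.le
    have hd2 : HasDerivAt (fun s => loglog (π - s))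
        (-(1 / ((π - t) * Real.log ((π - t) / (2 * π))))) t :=
      (hasDerivAt_loglog (sub_pos.2 ht.2) (by linarith [ht.1])).comp_const_sub π t
    have hd := (hd1.add hd2).deriv
    have hd' : deriv (fun s => loglog s + loglog (π - s)) t = _ := hd
    rw [hd']
    have e1 := energy_summand_le ht.1 ht.2.le hA (hwt_le_left hn ht)
    have e2 := energy_summand_le (sub_pos.2 ht.2) (by linarith [ht.1]) hA (hwt_le_right hm ht)
    generalize 1 / (t * Real.log (t / (2 * π))) = a at *
    generalize 1 / ((π - t) * Real.log ((π - t) / (2 * π))) = b at *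
    generalize loglog t = c at *
    generalize loglog (π - t) = d at *
    have h2 : (a + -b) ^ 2 + (c + d) ^ 2 ≤ 2 * (a ^ 2 + c ^ 2) + 2 * (b ^ 2 + d ^ 2) := by
      nlinarith [sq_nonneg (a + b), sq_nonneg (c - d)]
    linarith [mul_le_mul_of_nonneg_right h2 hH]

end

/-- `w(t) = ln(−ln(t/2π)) + ln(−ln((π−t)/2π))` is `C¹` on `(0,π)`, blows up at `0⁺` and at
`π⁻`, but has finite weighted `H¹`-norm `∫₀^π (|w'|² + |w|²) h dt < ∞`. -/
theorem singular_function_in_weighted_space (N m n : ℕ) (hN : 3 ≤ N)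
    (hm : 2 ≤ m) (hn : 2 ≤ n) (hmn : m + n = N + 1) :
    ContDiffOn ℝ 1
      (fun t : ℝ => Real.log (-Real.log (t / (2 * Real.pi)))
        + Real.log (-Real.log ((Real.pi - t) / (2 * Real.pi))))
      (Set.Ioo 0 Real.pi) ∧
    Filter.Tendsto
      (fun t : ℝ => Real.log (-Real.log (t / (2 * Real.pi)))
        + Real.log (-Real.log ((Real.pi - t) / (2 * Real.pi))))
      (nhdsWithin 0 (Set.Ioi 0)) Filter.atTop ∧
    Filter.Tendsto
      (fun t : ℝ => Real.log (-Real.log (t / (2 * Real.pi)))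
        + Real.log (-Real.log ((Real.pi - t) / (2 * Real.pi))))
      (nhdsWithin Real.pi (Set.Iio Real.pi)) Filter.atTop ∧
    IntegrableOn
      (fun t : ℝ =>
        ((deriv (fun s : ℝ => Real.log (-Real.log (s / (2 * Real.pi)))
            + Real.log (-Real.log ((Real.pi - s) / (2 * Real.pi)))) t) ^ 2
          + (Real.log (-Real.log (t / (2 * Real.pi)))
              + Real.log (-Real.log ((Real.pi - t) / (2 * Real.pi)))) ^ 2) * hwt m n t)
      (Set.Ioo 0 Real.pi) := by
  refine ⟨?_, tendsto_sum_zero, tendsto_sum_pi, integrableOn_energy hm hn⟩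
  refine contDiffOn_loglog.add (contDiffOn_loglog.comp (g := loglog) (f := fun t => Real.pi - t)
    (by fun_prop) fun t ht => ?_)
  exact ⟨sub_pos.2 ht.2, sub_lt_self _ ht.1⟩
end
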